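/- Let a = (a₁,…,aₙ) ∈ [1,∞)ⁿ and a_t ≥ 1. Let k₀, k ∈ 𝓢(ℝⁿ) satisfy: supp k₀, supp k ⊆ {x ∈ ℝⁿ : xₙ ≥ 0}, k has vanishing moments of all orders, and Σ_{j=0}^∞ k_j * u = u in 𝓢'(ℝⁿ) for every u ∈ 𝓢'(ℝⁿ). Let η ∈ 𝓢(ℝ) with η(0) = 1. Then: (i) for every ψ ∈ 𝓢(ℝⁿ×ℝ) the series Σ_{j=0}^∞ (x,t) ↦ (ǩ_j * ψ(·,t))(x)·η(2^{j a_t} t) converges in 𝓢(ℝⁿ×ℝ), and Tψ(x) := ∫_ℝ Σ_{j=0}^∞ (ǩ_j * ψ(·,t))(x)·η(2^{j a_t} t) dt defines a continuous linear map T : 𝓢(ℝⁿ×ℝ) → 𝓢(ℝⁿ); (ii) with Qu(·,t) ∈ 𝓢'(ℝⁿ) given by ⟨Qu(·,t), φ⟩ = Σ_{j=0}^∞ η(2^{j a_t} t)·⟨k_j * u, φ⟩ and Λ_{Qu} ∈ 𝓢'(ℝⁿ×ℝ) given by ⟨Λ_{Qu}, ψ⟩ = ∫_ℝ ⟨Qu(·,t),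 ψ(·,t)⟩ dt, one has ⟨Λ_{Qu}, ψ⟩ = ⟨u, Tψ⟩ for all u ∈ 𝓢'(ℝⁿ) and ψ ∈ 𝓢(ℝⁿ×ℝ); in particular u ↦ Λ_{Qu} is weak*-continuous from 𝓢'(ℝⁿ) to 𝓢'(ℝⁿ×ℝ). -/

import Mathlib

/-!
After the substitution `z = 2 ^ (j a) (y - x)`, the term of index `j ≥ 1` of the series is
`η (2 ^ (j a_t) t) ∫ k(z) ψ(x + L_j z, t) dz`, where the contraction `L_j = 2 ^ (-j a)` satisfies
`‖L_j‖ ≤ r ^ j` for some `r < 1`. The vanishing moments of `k` annihilate the Taylor polynomial of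
`ψ` in `L_j z` of any order `M`, so that every Schwartz seminorm of the integral is
`O(r ^ (j M))`. For `M` large this beats the growth `2 ^ (j |a_t| m)` caused by differentiating
`η (2 ^ (j a_t) t)` at most `m` times. The operators therefore sum absolutely, and `T` is their sum
followed by integration in `t`.

Identity (ii) asks a tempered distribution to commute with an integral and a sum. Being bounded by
finitely many seminorms, it factors, by Hahn–Banach, through a Banach space of weighted derivatives;
there it commutes with the Bochner integral, and a sum is an integral against counting measure.
-/

open MeasureTheory Filter Topology

noncomputable section

/-- Anisotropic dilation: `θ_0 = θ₀` and `θ_j(x) = 2^{j|a|} θ(2^{ja}x)` for `j ≥ 1`. -/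
def anisoDil {m : ℕ} (a : Fin m → ℝ) (θ₀ θ : (Fin m → ℝ) → ℝ) (j : ℕ)
    (x : Fin m → ℝ) : ℝ :=
  if j = 0 then θ₀ x
  else (2:ℝ) ^ ((j:ℝ) * ∑ i, a i) * θ (fun i => (2:ℝ) ^ ((j:ℝ) * a i) * x i)

/-- `θ` has vanishing moments of all orders. -/
def VanishingMoments {m : ℕ} (θ : (Fin m → ℝ) → ℝ) : Prop :=
  ∀ α : Fin m → ℕ, (∫ x : Fin m → ℝ, (∏ i, x i ^ α i) * θ x) = 0

open scoped ContDiff SchwartzMap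

section ParametricIntegral

variable {X D F : Type*} [MeasurableSpace X] {μ : Measure X}
  [NormedAddCommGroup D] [NormedSpace ℝ D] [NormedAddCommGroup F] [NormedSpace ℝ F]

/-- A family `f s` of smooth functions of `x`, each of whose iterated derivatives is measurable in
the parameter `s` and dominated, uniformly in `x`, by a `μ`-integrable function of `s`. Such
families may be differentiated under the integral sign to all orders. -/
structure SmoothDominated (μ : Measure X) (f : X → D → F) : Prop where
  smooth : ∀ s, ContDiff ℝ ∞ (f s)
  meas : ∀ l x, AEStronglyMeasurable (fun s => iteratedFDeriv ℝ l (f s) x) μ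
  bound : ∀ l, ∃ b : X → ℝ, Integrable b μ ∧ ∀ s x, ‖iteratedFDeriv ℝ l (f s) x‖ ≤ b s

namespace SmoothDominated

variable {f : X → D → F}

lemma integrable_iteratedFDeriv (hf : SmoothDominated μ f) (l : ℕ) (x : D) :
    Integrable (fun s => iteratedFDeriv ℝ l (f s) x) μ := by
  obtain ⟨b, hb, hfb⟩ := hf.bound l
  exact hb.mono' (hf.meas l x) (.of_forall fun s => hfb s x)

lemma integrable (hf : SmoothDominated μ f) (x : D) : Integrable (fun s => f s x) μ := by
  have h := (continuousMultilinearCurryFin0 ℝ D F).toContinuousLinearEquiv.toContinuousLinearMap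
    |>.integrable_comp (hf.integrable_iteratedFDeriv 0 x)
  simpa [iteratedFDeriv_zero_eq_comp] using h

lemma aestronglyMeasurable_fderiv_iteratedFDeriv (hf : SmoothDominated μ f) (l : ℕ) (x : D) :
    AEStronglyMeasurable (fun s => fderiv ℝ (iteratedFDeriv ℝ l (f s)) x) μ := by
  simp_rw [fderiv_iteratedFDeriv]
  exact LinearIsometryEquiv.continuous _ |>.comp_aestronglyMeasurable (hf.meas (l + 1) x)

lemma hasFDerivAt_integral_iteratedFDeriv (hf : SmoothDominated μ f) (l : ℕ) (x : D) :
    HasFDerivAt (fun x => ∫ s, iteratedFDeriv ℝ l (f s) x ∂μ)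
      (∫ s, fderiv ℝ (iteratedFDeriv ℝ l (f s)) x ∂μ) x := by
  obtain ⟨b, hb, hfb⟩ := hf.bound (l + 1)
  refine hasFDerivAt_integral_of_dominated_of_fderiv_le (bound := b)
    (F := fun y s => iteratedFDeriv ℝ l (f s) y)
    (F' := fun y s => fderiv ℝ (iteratedFDeriv ℝ l (f s)) y) univ_mem
    (.of_forall fun y => (hf.integrable_iteratedFDeriv l y).1) (hf.integrable_iteratedFDeriv l x)
    (hf.aestronglyMeasurable_fderiv_iteratedFDeriv l x) (.of_forall fun s y _ => ?_) hb
    (.of_forall fun s y _ => ?_)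
  · exact norm_fderiv_iteratedFDeriv.trans_le (hfb s y)
  · exact (hf.smooth s).differentiable_iteratedFDeriv (mod_cast ENat.natCast_lt_top l) y
      |>.hasFDerivAt

lemma iteratedFDeriv_integral (hf : SmoothDominated μ f) (l : ℕ) :
    iteratedFDeriv ℝ l (fun x => ∫ s, f s x ∂μ) = fun x => ∫ s, iteratedFDeriv ℝ l (f s) x ∂μ := by
  induction l with
  | zero =>
    simp only [iteratedFDeriv_zero_eq_comp, Function.comp_def]
    exact funext fun x => ((continuousMultilinearCurryFin0 ℝ D F).symm.toContinuousLinearEquiv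
      |>.integral_comp_comm fun s => f s x).symm
  | succ l ih =>
    simp only [iteratedFDeriv_succ_eq_comp_left, Function.comp_def, ih]
    refine funext fun x => ?_
    rw [(hf.hasFDerivAt_integral_iteratedFDeriv l x).fderiv]
    exact (ContinuousLinearEquiv.integral_comp_comm (𝕜 := ℝ) (E := D →L[ℝ] D [×l]→L[ℝ] F)
      (F := D [×(l + 1)]→L[ℝ] F) (μ := μ)
      (continuousMultilinearCurryLeftEquiv ℝ
        (fun _ : Fin (l + 1) => D) F).symm.toContinuousLinearEquiv
      fun s => fderiv ℝ (iteratedFDeriv ℝ l (f s)) x).symm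

lemma contDiff_integral (hf : SmoothDominated μ f) : ContDiff ℝ ∞ (fun x => ∫ s, f s x ∂μ) :=
  contDiff_of_differentiable_iteratedFDeriv fun l _ => by
    rw [hf.iteratedFDeriv_integral]
    exact fun x => (hf.hasFDerivAt_integral_iteratedFDeriv l x).differentiableAt

end SmoothDominated

end ParametricIntegral

section Taylor

variable {D F : Type*} [NormedAddCommGroup D] [NormedSpace ℝ D]
  [NormedAddCommGroup F] [NormedSpace ℝ F]

lemma norm_iteratedFDeriv_iteratedFDeriv (f : D → F) (m l : ℕ) (x : D) :
    ‖iteratedFDeriv ℝ m (iteratedFDeriv ℝ l f) x‖ = ‖iteratedFDeriv ℝ (m + l) f x‖ := by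
  induction l generalizing m with
  | zero =>
    rw [iteratedFDeriv_zero_eq_comp]
    exact LinearIsometryEquiv.norm_iteratedFDeriv_comp_left _ _ _ _
  | succ l ih =>
    have hcurry := LinearIsometryEquiv.norm_iteratedFDeriv_comp_left (𝕜 := ℝ)
      (F := D →L[ℝ] D [×l]→L[ℝ] F) (G := D [×(l + 1)]→L[ℝ] F)
      (continuousMultilinearCurryLeftEquiv ℝ (fun _ : Fin (l + 1) => D) F).symm
      (fderiv ℝ (iteratedFDeriv ℝ l f)) x m
    rw [norm_iteratedFDeriv_fderiv, ih, add_right_comm, add_assoc] at hcurry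
    rwa [iteratedFDeriv_succ_eq_comp_left]

lemma norm_sub_taylor_le [CompleteSpace F] {f : D → F} {M : ℕ} (hf : ContDiff ℝ M f) {p v : D}
    {C : ℝ} (hC : ∀ r ∈ Set.Icc (0 : ℝ) 1, ‖iteratedFDeriv ℝ M f (p + r • v)‖ ≤ C) :
    ‖f (p + v) - ∑ m ∈ Finset.range M, (m.factorial : ℝ)⁻¹ • iteratedFDeriv ℝ m f p (fun _ => v)‖
      ≤ C * ‖v‖ ^ M := by
  cases M with
  | zero => simpa using hC 1 (by simp)
  | succ M =>
    rw [map_add_eq_sum_add_integral_iteratedFDeriv (f := f) (fun _ _ => mod_cast hf.contDiffAt),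
      add_sub_cancel_left, norm_smul, norm_inv, Real.norm_natCast]
    have hrem : ∀ r ∈ Set.uIoc (0 : ℝ) 1,
        ‖(1 - r) ^ M • iteratedFDeriv ℝ (M + 1) f (p + r • v) (fun _ => v)‖
          ≤ C * ‖v‖ ^ (M + 1) := fun r hr => by
      rw [Set.uIoc_of_le zero_le_one] at hr
      have hr1 : ‖(1 - r) ^ M‖ ≤ 1 := by
        rw [norm_pow, Real.norm_of_nonneg (by linarith [hr.2])]
        exact pow_le_one₀ (by linarith [hr.2]) (by linarith [hr.1])
      have hD : ‖iteratedFDeriv ℝ (M + 1) f (p + r • v) (fun _ => v)‖ ≤ C * ‖v‖ ^ (M + 1) :=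
        (iteratedFDeriv ℝ (M + 1) f (p + r • v)).le_of_opNorm_le (hC r ⟨hr.1.le, hr.2⟩) _
          |>.trans_eq (by simp)
      rw [norm_smul]
      exact (mul_le_of_le_one_left (norm_nonneg _) hr1).trans hD
    have hint := intervalIntegral.norm_integral_le_of_norm_le_const hrem
    rw [sub_zero, abs_one, mul_one] at hint
    exact (mul_le_of_le_one_left (norm_nonneg _)
      (inv_le_one_of_one_le₀ (mod_cast M.factorial_pos))).trans hint

end Taylor

section VanishingMoments

variable {V G : Type*} [NormedAddCommGroup V] [NormedSpace ℝ V] [MeasurableSpace V]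
  {μ : Measure V} [NormedAddCommGroup G] [NormedSpace ℝ G]

/-- The moments of `κ` of order less than `M` with respect to `μ` vanish. A homogeneous polynomial
of degree `m` is encoded as the restriction of an `m`-linear form to the diagonal. -/
def MomentsVanishBelow (μ : Measure V) (κ : V → ℝ) (M : ℕ) : Prop :=
  ∀ m < M, ∀ B : V [×m]→L[ℝ] ℝ, ∫ z, κ z * B (fun _ => z) ∂μ = 0

variable [BorelSpace V] [SecondCountableTopology V] [μ.HasTemperateGrowth]

lemma integrable_norm_mul_pow_mul_one_add_pow (κ : 𝓢(V, ℝ)) (M k : ℕ) :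
    Integrable (fun z => ‖κ z‖ * (‖z‖ ^ M * (1 + ‖z‖) ^ k)) μ := by
  have hexpand : (fun z => ‖κ z‖ * (‖z‖ ^ M * (1 + ‖z‖) ^ k)) = fun z =>
      ∑ i ∈ Finset.range (k + 1), (k.choose i : ℝ) * (‖z‖ ^ (M + i) * ‖κ z‖) := by
    ext z
    rw [add_comm 1, add_pow, Finset.mul_sum, Finset.mul_sum]
    refine Finset.sum_congr rfl fun i _ => ?_
    rw [one_pow, pow_add]
    ring
  rw [hexpand]
  exact integrable_finsetSum _ fun i _ => (κ.integrable_pow_mul μ _).const_mul _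

lemma integrable_smul_diagonal (κ : 𝓢(V, ℝ)) {m : ℕ} (B : V [×m]→L[ℝ] G) :
    Integrable (fun z => κ z • B (fun _ => z)) μ := by
  have hcont : Continuous fun z => κ z • B (fun _ => z) := by fun_prop
  refine ((κ.integrable_pow_mul μ m).const_mul ‖B‖).mono' hcont.aestronglyMeasurable
    (.of_forall fun z => ?_)
  calc ‖κ z • B (fun _ => z)‖ ≤ ‖κ z‖ * (‖B‖ * ‖z‖ ^ m) := by
        rw [norm_smul]
        gcongr
        exact (B.le_opNorm _).trans_eq (by simp)
    _ = ‖B‖ * (‖z‖ ^ m * ‖κ z‖) := by ring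

lemma MomentsVanishBelow.integral_smul_diagonal_eq_zero [CompleteSpace G] {κ : 𝓢(V, ℝ)} {M : ℕ}
    (hκ : MomentsVanishBelow μ κ M) {m : ℕ} (hm : m < M) (B : V [×m]→L[ℝ] G) :
    ∫ z, κ z • B (fun _ => z) ∂μ = 0 := by
  refine SeparatingDual.eq_zero_of_forall_dual_eq_zero (R := ℝ) fun g => ?_
  rw [← g.integral_comp_comm (integrable_smul_diagonal κ B)]
  simpa using hκ m hm (g.compContinuousMultilinearMap B)

end VanishingMoments

section Average

variable {V D G : Type*} [NormedAddCommGroup V] [NormedSpace ℝ V] [MeasurableSpace V]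
  {μ : Measure V}
  [NormedAddCommGroup D] [NormedSpace ℝ D] [NormedAddCommGroup G] [NormedSpace ℝ G]

lemma one_add_norm_le_mul {E : Type*} [SeminormedAddCommGroup E] (p v : E) :
    1 + ‖p‖ ≤ (1 + ‖p + v‖) * (1 + ‖v‖) := by
  have := norm_le_norm_add_norm_sub' p (p + v)
  rw [sub_add_cancel_left, norm_neg] at this
  nlinarith [mul_nonneg (norm_nonneg (p + v)) (norm_nonneg v)]

lemma one_add_pow_mul_norm_sub_taylor_le [CompleteSpace G] {f : D → G} {M k : ℕ} {Q : ℝ}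
    (hf : ContDiff ℝ M f) (hQ : ∀ w, (1 + ‖w‖) ^ k * ‖iteratedFDeriv ℝ M f w‖ ≤ Q) (p v : D) :
    (1 + ‖p‖) ^ k * ‖f (p + v) -
        ∑ m ∈ Finset.range M, (m.factorial : ℝ)⁻¹ • iteratedFDeriv ℝ m f p (fun _ => v)‖
      ≤ Q * (‖v‖ ^ M * (1 + ‖v‖) ^ k) := by
  have hderiv : ∀ r ∈ Set.Icc (0 : ℝ) 1,
      ‖iteratedFDeriv ℝ M f (p + r • v)‖ ≤ Q * (1 + ‖v‖) ^ k / (1 + ‖p‖) ^ k := fun r hr => by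
    have hrv : ‖r • v‖ ≤ ‖v‖ := by
      rw [norm_smul, Real.norm_of_nonneg hr.1]
      exact mul_le_of_le_one_left (norm_nonneg _) hr.2
    have hweight : (1 + ‖p‖) ^ k ≤ (1 + ‖p + r • v‖) ^ k * (1 + ‖v‖) ^ k := by
      rw [← mul_pow]
      exact pow_le_pow_left₀ (by positivity)
        ((one_add_norm_le_mul p (r • v)).trans (by gcongr)) k
    rw [le_div_iff₀ (by positivity)]
    calc ‖iteratedFDeriv ℝ M f (p + r • v)‖ * (1 + ‖p‖) ^ k
        ≤ ‖iteratedFDeriv ℝ M f (p + r • v)‖ * ((1 + ‖p + r • v‖) ^ k * (1 + ‖v‖) ^ k) := by gcongr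
      _ = (1 + ‖p + r • v‖) ^ k * ‖iteratedFDeriv ℝ M f (p + r • v)‖ * (1 + ‖v‖) ^ k := by ring
      _ ≤ Q * (1 + ‖v‖) ^ k := by gcongr; exact hQ _
  calc _ ≤ (1 + ‖p‖) ^ k * (Q * (1 + ‖v‖) ^ k / (1 + ‖p‖) ^ k * ‖v‖ ^ M) := by
        gcongr
        exact norm_sub_taylor_le hf hderiv
    _ = Q * (‖v‖ ^ M * (1 + ‖v‖) ^ k) := by field_simp

variable [BorelSpace V] [SecondCountableTopology V] [μ.HasTemperateGrowth]

lemma MomentsVanishBelow.integral_smul_comp_add_eq [CompleteSpace G] {κ : 𝓢(V, ℝ)} {M : ℕ}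
    (hκ : MomentsVanishBelow μ κ M) (L : V →L[ℝ] D) (f : D → G) (p : D)
    (hint : Integrable (fun z => κ z • f (p + L z)) μ) :
    ∫ z, κ z • f (p + L z) ∂μ = ∫ z, κ z • (f (p + L z) - ∑ m ∈ Finset.range M,
      (m.factorial : ℝ)⁻¹ • iteratedFDeriv ℝ m f p (fun _ => L z)) ∂μ := by
  set B : (m : ℕ) → V [×m]→L[ℝ] G := fun m =>
    (m.factorial : ℝ)⁻¹ • (iteratedFDeriv ℝ m f p).compContinuousLinearMap fun _ => L
  have hB : ∫ z, ∑ m ∈ Finset.range M, κ z • B m (fun _ => z) ∂μ = 0 := by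
    rw [integral_finsetSum _ fun m _ => integrable_smul_diagonal κ (B m)]
    exact Finset.sum_eq_zero fun m hm =>
      hκ.integral_smul_diagonal_eq_zero (Finset.mem_range.1 hm) (B m)
  have hsub := integral_sub hint
    (integrable_finsetSum (Finset.range M) fun m _ => integrable_smul_diagonal κ (B m))
  rw [hB, sub_zero] at hsub
  simp_rw [smul_sub, Finset.smul_sum]
  exact hsub.symm

lemma MomentsVanishBelow.pow_mul_norm_integral_smul_comp_add_le [CompleteSpace G] {κ : 𝓢(V, ℝ)}
    {M k : ℕ} (hκ : MomentsVanishBelow μ κ M) (L : V →L[ℝ] D) {f : D → G} (hf : ContDiff ℝ M f)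
    {Q : ℝ} (hQ : ∀ w, (1 + ‖w‖) ^ k * ‖iteratedFDeriv ℝ M f w‖ ≤ Q) (p : D)
    (hint : Integrable (fun z => κ z • f (p + L z)) μ) :
    (1 + ‖p‖) ^ k * ‖∫ z, κ z • f (p + L z) ∂μ‖ ≤
      Q * (‖L‖ ^ M * (1 + ‖L‖) ^ k) * ∫ z, ‖κ z‖ * (‖z‖ ^ M * (1 + ‖z‖) ^ k) ∂μ := by
  have hQ0 : 0 ≤ Q := le_trans (by positivity) (hQ 0)
  rw [hκ.integral_smul_comp_add_eq L f p hint, ← integral_const_mul,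
    ← Real.norm_of_nonneg (by positivity : 0 ≤ (1 + ‖p‖) ^ k), ← norm_smul, ← integral_smul]
  refine norm_integral_le_of_norm_le
    ((integrable_norm_mul_pow_mul_one_add_pow κ M k).const_mul _) (.of_forall fun z => ?_)
  have hLz : 1 + ‖L z‖ ≤ (1 + ‖L‖) * (1 + ‖z‖) := by
    nlinarith [L.le_opNorm z, norm_nonneg L, norm_nonneg z]
  rw [smul_comm, norm_smul, norm_smul, Real.norm_of_nonneg (by positivity : 0 ≤ (1 + ‖p‖) ^ k)]
  calc _ ≤ ‖κ z‖ * (Q * (‖L z‖ ^ M * (1 + ‖L z‖) ^ k)) := by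
        exact mul_le_mul_of_nonneg_left (one_add_pow_mul_norm_sub_taylor_le hf hQ p (L z))
          (norm_nonneg _)
    _ ≤ ‖κ z‖ * (Q * ((‖L‖ * ‖z‖) ^ M * ((1 + ‖L‖) * (1 + ‖z‖)) ^ k)) := by
        gcongr
        exact L.le_opNorm z
    _ = Q * (‖L‖ ^ M * (1 + ‖L‖) ^ k) * (‖κ z‖ * (‖z‖ ^ M * (1 + ‖z‖) ^ k)) := by
        rw [mul_pow, mul_pow]
        ring

lemma iteratedFDeriv_smul_comp_add (ψ : 𝓢(D, G)) (c : ℝ) (v : D) (l : ℕ) :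
    iteratedFDeriv ℝ l (fun p => c • ψ (p + v)) = fun p => c • iteratedFDeriv ℝ l ψ (p + v) := by
  have hψ : ContDiff ℝ l fun p => ψ (p + v) := (ψ.smooth l).comp (contDiff_id.add contDiff_const)
  ext1 p
  rw [iteratedFDeriv_const_smul_apply' hψ.contDiffAt, iteratedFDeriv_comp_add_right]

lemma smoothDominated_smul_comp_add (κ : 𝓢(V, ℝ)) (L : V →L[ℝ] D) (ψ : 𝓢(D, G)) :
    SmoothDominated μ (fun z p => κ z • ψ (p + L z)) where
  smooth z := ((ψ.smooth ⊤).comp (contDiff_id.add contDiff_const)).const_smul (κ z)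
  meas l p := by
    have := (ψ.smooth ⊤).continuous_iteratedFDeriv (m := l) (mod_cast le_top)
    simp_rw [iteratedFDeriv_smul_comp_add]
    exact Continuous.aestronglyMeasurable (by fun_prop)
  bound l := by
    refine ⟨fun z => ‖κ z‖ * SchwartzMap.seminorm ℝ 0 l ψ, κ.integrable.norm.mul_const _,
      fun z p => ?_⟩
    rw [iteratedFDeriv_smul_comp_add, norm_smul]
    exact mul_le_mul_of_nonneg_left (ψ.norm_iteratedFDeriv_le_seminorm ℝ l _) (norm_nonneg _)

lemma iteratedFDeriv_integral_smul_comp_add (κ : 𝓢(V, ℝ)) (L : V →L[ℝ] D) (ψ : 𝓢(D, G)) (l : ℕ)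
    (p : D) : iteratedFDeriv ℝ l (fun p => ∫ z, κ z • ψ (p + L z) ∂μ) p =
      ∫ z, κ z • iteratedFDeriv ℝ l ψ (p + L z) ∂μ := by
  simp_rw [(smoothDominated_smul_comp_add κ L ψ).iteratedFDeriv_integral,
    iteratedFDeriv_smul_comp_add]

variable [CompleteSpace G]

lemma MomentsVanishBelow.pow_mul_norm_iteratedFDeriv_average_le {κ : 𝓢(V, ℝ)} {M : ℕ}
    (hκ : MomentsVanishBelow μ κ M) (k l : ℕ) (L : V →L[ℝ] D) (ψ : 𝓢(D, G)) (p : D) :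
    (1 + ‖p‖) ^ k * ‖iteratedFDeriv ℝ l (fun p => ∫ z, κ z • ψ (p + L z) ∂μ) p‖ ≤
      2 ^ k * (∫ z, ‖κ z‖ * (‖z‖ ^ M * (1 + ‖z‖) ^ k) ∂μ) * (‖L‖ ^ M * (1 + ‖L‖) ^ k) *
        (Finset.Iic (k, M + l)).sup (schwartzSeminormFamily ℝ D G) ψ := by
  have hint : Integrable (fun z => κ z • iteratedFDeriv ℝ l ψ (p + L z)) μ := by
    simpa only [iteratedFDeriv_smul_comp_add] using
      (smoothDominated_smul_comp_add κ L ψ).integrable_iteratedFDeriv l p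
  have hdecay : ∀ w, (1 + ‖w‖) ^ k * ‖iteratedFDeriv ℝ M (iteratedFDeriv ℝ l ψ) w‖ ≤
      2 ^ k * (Finset.Iic (k, M + l)).sup (schwartzSeminormFamily ℝ D G) ψ := fun w => by
    rw [norm_iteratedFDeriv_iteratedFDeriv]
    exact SchwartzMap.one_add_le_sup_seminorm_apply (𝕜 := ℝ) (m := (k, M + l)) le_rfl le_rfl ψ w
  rw [iteratedFDeriv_integral_smul_comp_add]
  exact (hκ.pow_mul_norm_integral_smul_comp_add_le L
    ((ψ.smooth ⊤).iteratedFDeriv_right (mod_cast le_top)) hdecay p hint).trans_eq (by ring)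

/-- The operator `ψ ↦ ∫ κ(z) ψ(· + L z) dμ(z)` on Schwartz functions. For `L` a dilation this is
the convolution of `ψ` with a reflected dilate of `κ`, possibly in some of the variables only. -/
def averageCLM (μ : Measure V) [μ.HasTemperateGrowth] (κ : 𝓢(V, ℝ)) (L : V →L[ℝ] D) :
    𝓢(D, G) →L[ℝ] 𝓢(D, G) :=
  SchwartzMap.mkCLM (fun ψ p => ∫ z, κ z • ψ (p + L z) ∂μ)
    (fun ψ φ p => by
      simp only [add_apply, smul_add]
      exact integral_add ((smoothDominated_smul_comp_add κ L ψ).integrable p)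
        ((smoothDominated_smul_comp_add κ L φ).integrable p))
    (fun c ψ p => by
      simp only [smul_apply, smul_comm _ c, RingHom.id_apply]
      exact integral_smul c _)
    (fun ψ => (smoothDominated_smul_comp_add κ L ψ).contDiff_integral)
    (fun ⟨k, l⟩ =>
      have hκ : MomentsVanishBelow μ κ 0 := fun _ h => absurd h (Nat.not_lt_zero _)
      ⟨Finset.Iic (k, 0 + l), _, by positivity, fun ψ p => le_trans (by gcongr; linarith)
        (hκ.pow_mul_norm_iteratedFDeriv_average_le k l L ψ p)⟩)

@[simp]
lemma averageCLM_apply (κ : 𝓢(V, ℝ)) (L : V →L[ℝ] D) (ψ : 𝓢(D, G)) (p : D) :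
    averageCLM μ κ L ψ p = ∫ z, κ z • ψ (p + L z) ∂μ := rfl

lemma MomentsVanishBelow.sup_seminorm_averageCLM_le {κ : 𝓢(V, ℝ)} {M : ℕ}
    (hκ : MomentsVanishBelow μ κ M) (k l : ℕ) (L : V →L[ℝ] D) (ψ : 𝓢(D, G)) :
    (Finset.Iic (k, l)).sup (schwartzSeminormFamily ℝ D G) (averageCLM μ κ L ψ) ≤
      2 ^ k * (∫ z, ‖κ z‖ * (‖z‖ ^ M * (1 + ‖z‖) ^ k) ∂μ) * (‖L‖ ^ M * (1 + ‖L‖) ^ k) *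
        (Finset.Iic (k, M + l)).sup (schwartzSeminormFamily ℝ D G) ψ := by
  refine Seminorm.finset_sup_apply_le (by positivity) fun ⟨k', l'⟩ hi => ?_
  obtain ⟨hk, hl⟩ : k' ≤ k ∧ l' ≤ l := Prod.mk_le_mk.1 (Finset.mem_Iic.1 hi)
  refine SchwartzMap.seminorm_le_bound ℝ k' l' _ (by positivity) fun p => ?_
  calc ‖p‖ ^ k' * ‖iteratedFDeriv ℝ l' (averageCLM μ κ L ψ) p‖
      ≤ (1 + ‖p‖) ^ k * ‖iteratedFDeriv ℝ l' (averageCLM μ κ L ψ) p‖ := by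
        gcongr ?_ * _
        exact (pow_le_pow_left₀ (norm_nonneg p) (by linarith) k').trans
          (pow_le_pow_right₀ (by linarith [norm_nonneg p]) hk)
    _ ≤ _ := hκ.pow_mul_norm_iteratedFDeriv_average_le k l' L ψ p
    _ ≤ _ := by
        have hmono := Finset.sup_mono (f := schwartzSeminormFamily ℝ D G)
          (Finset.Iic_subset_Iic.2 (Prod.mk_le_mk.2 ⟨le_refl k, Nat.add_le_add_left hl M⟩)) ψ
        exact mul_le_mul_of_nonneg_left hmono (by positivity)

end Average

section Multiplication

variable {D W G : Type*} [NormedAddCommGroup D] [NormedSpace ℝ D]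
  [NormedAddCommGroup W] [NormedSpace ℝ W] [NormedAddCommGroup G] [NormedSpace ℝ G]

lemma seminorm_smulLeftCLM_le {g : D → ℝ} (hg : g.HasTemperateGrowth) {k l N : ℕ} {K : ℝ}
    (hK : ∀ i ≤ l, ∀ x, ‖iteratedFDeriv ℝ i g x‖ ≤ K * (1 + ‖x‖) ^ N) (ψ : 𝓢(D, G)) :
    SchwartzMap.seminorm ℝ k l (SchwartzMap.smulLeftCLM G g ψ) ≤
      2 ^ l * K * (2 ^ (k + N) * (Finset.Iic (k + N, l)).sup (schwartzSeminormFamily ℝ D G) ψ) := by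
  have hK0 : 0 ≤ K := by simpa using (norm_nonneg _).trans (hK 0 l.zero_le 0)
  refine SchwartzMap.seminorm_le_bound ℝ k l _ (by positivity) fun x => ?_
  set P := (Finset.Iic (k + N, l)).sup (schwartzSeminormFamily ℝ D G) ψ
  have hψ : ∀ i ≤ l, (1 + ‖x‖) ^ (k + N) * ‖iteratedFDeriv ℝ i ψ x‖ ≤ 2 ^ (k + N) * P :=
    fun i hi => SchwartzMap.one_add_le_sup_seminorm_apply (𝕜 := ℝ) (m := (k + N, l)) le_rfl hi ψ x
  rw [SchwartzMap.smulLeftCLM_apply hg]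
  calc ‖x‖ ^ k * ‖iteratedFDeriv ℝ l (fun x => g x • ψ x) x‖
      ≤ (1 + ‖x‖) ^ k * ∑ i ∈ Finset.range (l + 1), (l.choose i : ℝ) *
          ‖iteratedFDeriv ℝ i g x‖ * ‖iteratedFDeriv ℝ (l - i) ψ x‖ := by
        gcongr
        · linarith
        · exact norm_iteratedFDeriv_smul_le hg.1 (ψ.smooth ⊤) x (mod_cast le_top)
    _ ≤ ∑ i ∈ Finset.range (l + 1), (l.choose i : ℝ) * (K * (2 ^ (k + N) * P)) := by
        rw [Finset.mul_sum]
        refine Finset.sum_le_sum fun i hi => ?_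
        calc _ ≤ (1 + ‖x‖) ^ k * ((l.choose i : ℝ) * (K * (1 + ‖x‖) ^ N) *
              ‖iteratedFDeriv ℝ (l - i) ψ x‖) := by
              gcongr
              exact hK i (Finset.mem_range_succ_iff.1 hi) x
          _ = (l.choose i : ℝ) * (K * ((1 + ‖x‖) ^ (k + N) * ‖iteratedFDeriv ℝ (l - i) ψ x‖)) := by
              rw [pow_add]
              ring
          _ ≤ (l.choose i : ℝ) * (K * (2 ^ (k + N) * P)) := by
              gcongr _ * (_ * ?_)
              exact hψ _ (l.sub_le i)
    _ = 2 ^ l * K * (2 ^ (k + N) * P) := by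
        rw [← Finset.sum_mul, ← Nat.cast_sum, Nat.sum_range_choose]
        push_cast
        ring

lemma exists_norm_iteratedFDeriv_comp_le {η : W → ℝ} (hη : η.HasTemperateGrowth) (l : ℕ) :
    ∃ N : ℕ, ∃ C : ℝ, 0 ≤ C ∧ ∀ (A : D →L[ℝ] W), ∀ i ≤ l, ∀ x,
      ‖iteratedFDeriv ℝ i (η ∘ A) x‖ ≤ C * (1 + ‖A‖) ^ (N + l) * (1 + ‖x‖) ^ N := by
  obtain ⟨N, C, hC, hbound⟩ := hη.norm_iteratedFDeriv_le_uniform l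
  refine ⟨N, C, hC, fun A i hi x => ?_⟩
  have hAx : 1 + ‖A x‖ ≤ (1 + ‖A‖) * (1 + ‖x‖) := by
    nlinarith [A.le_opNorm x, norm_nonneg A, norm_nonneg x]
  rw [A.iteratedFDeriv_comp_right hη.1 x (mod_cast le_top)]
  calc _ ≤ ‖iteratedFDeriv ℝ i η (A x)‖ * ‖A‖ ^ i := by
        simpa using
          (iteratedFDeriv ℝ i η (A x)).norm_compContinuousLinearMap_le (fun _ : Fin i => A)
    _ ≤ C * ((1 + ‖A‖) * (1 + ‖x‖)) ^ N * (1 + ‖A‖) ^ l := by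
        gcongr
        · exact (hbound i hi (A x)).trans (by gcongr)
        · exact (pow_le_pow_left₀ (norm_nonneg A) (by linarith) i).trans
            (pow_le_pow_right₀ (by linarith [norm_nonneg A]) hi)
    _ = C * (1 + ‖A‖) ^ (N + l) * (1 + ‖x‖) ^ N := by
        rw [mul_pow, pow_add]
        ring

lemma exists_seminorm_smulLeftCLM_comp_le {η : W → ℝ} (hη : η.HasTemperateGrowth) (k l : ℕ) :
    ∃ N m : ℕ, ∃ C : ℝ, 0 ≤ C ∧ ∀ (A : D →L[ℝ] W) (ψ : 𝓢(D, G)),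
      SchwartzMap.seminorm ℝ k l (SchwartzMap.smulLeftCLM G (η ∘ A) ψ) ≤
        C * (1 + ‖A‖) ^ m * (Finset.Iic (N, l)).sup (schwartzSeminormFamily ℝ D G) ψ := by
  obtain ⟨N, C, hC, hbound⟩ := exists_norm_iteratedFDeriv_comp_le (D := D) hη l
  refine ⟨k + N, N + l, 2 ^ l * C * 2 ^ (k + N), by positivity, fun A ψ => ?_⟩
  exact (seminorm_smulLeftCLM_le (hη.comp A.hasTemperateGrowth) (hbound A) ψ).trans_eq (by ring)

end Multiplication

section SchwartzIntegral

open scoped BoundedContinuousFunction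

variable {E F : Type*} [NormedAddCommGroup E] [NormedSpace ℝ E]
  [NormedAddCommGroup F] [NormedSpace ℝ F]

/-- Bounded continuous functions into a normed group. Restating the domain of `→ᵇ` for normed
groups lets the norm of multilinear maps be found before the underlying pseudometric. -/
abbrev NormedBCF (X G : Type*) [TopologicalSpace X] [NormedAddCommGroup G] := X →ᵇ G

/-- The bounded function `x ↦ ‖x‖ ^ k D^l f(x)` attached to a Schwartz function `f`; its supremum
norm is the Schwartz seminorm of index `(k, l)`. -/
def weightedDeriv (k l : ℕ) : 𝓢(E, F) →ₗ[ℝ] NormedBCF E (E [×l]→L[ℝ] F) where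
  toFun f := BoundedContinuousFunction.ofNormedAddCommGroup
    (fun x => ‖x‖ ^ k • iteratedFDeriv ℝ l f x)
    ((continuous_norm.pow k).smul ((f.smooth l).continuous_iteratedFDeriv le_rfl))
    (SchwartzMap.seminorm ℝ k l f) fun x => by
      simpa [norm_smul] using f.le_seminorm ℝ k l x
  map_add' f g := by
    ext1 x
    have h := iteratedFDeriv_add_apply (i := l) (x := x) (f.smooth l).contDiffAt
      (g.smooth l).contDiffAt
    exact (congrArg _ h).trans (smul_add _ _ _)
  map_smul' c f := by
    ext1 x
    have h := iteratedFDeriv_const_smul_apply (i := l) (x := x) (a := c) (f.smooth l).contDiffAt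
    exact (congrArg _ h).trans (smul_comm _ _ _)

lemma weightedDeriv_apply (k l : ℕ) (f : 𝓢(E, F)) (x : E) :
    weightedDeriv k l f x = ‖x‖ ^ k • iteratedFDeriv ℝ l f x := rfl

lemma norm_weightedDeriv (k l : ℕ) (f : 𝓢(E, F)) :
    ‖weightedDeriv k l f‖ = SchwartzMap.seminorm ℝ k l f := by
  refine le_antisymm ((BoundedContinuousFunction.norm_le (apply_nonneg _ _)).2 fun x => ?_)
    (SchwartzMap.seminorm_le_bound ℝ k l f (norm_nonneg _) fun x => ?_)
  · simpa [weightedDeriv_apply, norm_smul] using f.le_seminorm ℝ k l x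
  · simpa [weightedDeriv_apply, norm_smul] using (weightedDeriv k l f).norm_coe_le_norm x

lemma exists_strongDual_comp_eq {V B : Type*} [AddCommGroup V] [Module ℝ V]
    [NormedAddCommGroup B] [NormedSpace ℝ B] (ι : V →ₗ[ℝ] B) (u : V →ₗ[ℝ] ℝ) (C : ℝ)
    (h : ∀ f, ‖u f‖ ≤ C * ‖ι f‖) : ∃ g : StrongDual ℝ B, ∀ f, g (ι f) = u f := by
  obtain ⟨σ, hσ⟩ := ι.rangeRestrict.exists_rightInverse_of_surjective ι.range_rangeRestrict
  have hισ : ∀ y : ι.range, ι (σ y) = y := fun y =>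
    congrArg Subtype.val (LinearMap.congr_fun hσ y)
  obtain ⟨g, hg, -⟩ := exists_extension_norm_eq ι.range
    ((u.comp σ).mkContinuous C fun y => by simpa [hισ] using h (σ y))
  refine ⟨g, fun f => ?_⟩
  have hgσ := hg (ι.rangeRestrict f)
  have hσf := h (σ (ι.rangeRestrict f) - f)
  rw [map_sub ι, hισ, LinearMap.codRestrict_apply, sub_self, norm_zero, mul_zero,
    norm_le_zero_iff, map_sub, sub_eq_zero] at hσf
  simpa [hσf] using hgσ

variable {X : Type*} [MeasurableSpace X] {μ : Measure X} {g : X → 𝓢(E, F)}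

/-- Integrability of a family of Schwartz functions: every weighted derivative is Bochner integrable
in the space of bounded continuous functions. Integrals and, for the counting measure, absolutely
convergent series are treated at once. -/
def SchwartzIntegrable (μ : Measure X) (g : X → 𝓢(E, F)) : Prop :=
  ∀ k l, Integrable (fun s => weightedDeriv k l (g s)) μ

namespace SchwartzIntegrable

lemma integrable_seminorm (hg : SchwartzIntegrable μ g) (k l : ℕ) :
    Integrable (fun s => SchwartzMap.seminorm ℝ k l (g s)) μ := by
  simpa only [norm_weightedDeriv] using (hg k l).norm

lemma smoothDominated (hg : SchwartzIntegrable μ g) : SmoothDominated μ (fun s => ⇑(g s)) where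
  smooth s := (g s).smooth ⊤
  meas l x := by
    have h := (BoundedContinuousFunction.evalCLM ℝ x).continuous.comp_aestronglyMeasurable
      (hg 0 l).1
    simpa [weightedDeriv_apply] using h
  bound l := ⟨_, hg.integrable_seminorm 0 l, fun s => (g s).norm_iteratedFDeriv_le_seminorm ℝ l⟩

lemma pow_mul_norm_iteratedFDeriv_integral_le (hg : SchwartzIntegrable μ g) (k l : ℕ) (x : E) :
    ‖x‖ ^ k * ‖iteratedFDeriv ℝ l (fun x => ∫ s, g s x ∂μ) x‖ ≤
      ∫ s, SchwartzMap.seminorm ℝ k l (g s) ∂μ := by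
  rw [hg.smoothDominated.iteratedFDeriv_integral, ← norm_norm x, ← norm_pow, ← norm_smul,
    ← integral_smul]
  refine norm_integral_le_of_norm_le (hg.integrable_seminorm k l) (.of_forall fun s => ?_)
  rw [norm_smul, norm_pow, norm_norm]
  exact (g s).le_seminorm ℝ k l x

/-- The pointwise integral of an integrable family of Schwartz functions. -/
def integral (hg : SchwartzIntegrable μ g) : 𝓢(E, F) where
  toFun x := ∫ s, g s x ∂μ
  smooth' := hg.smoothDominated.contDiff_integral
  decay' k l := ⟨_, hg.pow_mul_norm_iteratedFDeriv_integral_le k l⟩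

variable [CompleteSpace F]

lemma weightedDeriv_integral (hg : SchwartzIntegrable μ g) (k l : ℕ) :
    weightedDeriv k l hg.integral = ∫ s, weightedDeriv k l (g s) ∂μ := by
  ext1 x
  have heval := (BoundedContinuousFunction.evalCLM ℝ x).integral_comp_comm (hg k l)
  have hderiv := congrFun (hg.smoothDominated.iteratedFDeriv_integral l) x
  exact (congrArg _ hderiv).trans ((integral_smul (‖x‖ ^ k) _).symm.trans heval)

lemma apply_integral (hg : SchwartzIntegrable μ g) (u : 𝓢(E, F) →L[ℝ] ℝ) :
    u hg.integral = ∫ s, u (g s) ∂μ := by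
  obtain ⟨s, C, -, hC⟩ := Seminorm.bound_of_continuous (schwartz_withSeminorms ℝ E F)
    ((normSeminorm ℝ ℝ).comp u.toLinearMap) (continuous_norm.comp u.continuous)
  let ι : 𝓢(E, F) →ₗ[ℝ] (i : s) → NormedBCF E (E [×i.1.2]→L[ℝ] F) :=
    LinearMap.pi fun i => weightedDeriv i.1.1 i.1.2
  obtain ⟨v, hv⟩ := exists_strongDual_comp_eq ι u.toLinearMap C fun f => by
    refine (hC f).trans (mul_le_mul_of_nonneg_left ?_ C.2)
    refine Seminorm.finset_sup_apply_le (norm_nonneg _) fun i hi => ?_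
    exact (norm_weightedDeriv i.1 i.2 f).symm.trans_le (norm_le_pi_norm (ι f) ⟨i, hi⟩)
  have hι : ∫ x, ι (g x) ∂μ = ι hg.integral := by
    ext1 i
    rw [eval_integral fun i => hg i.1.1 i.1.2]
    exact (hg.weightedDeriv_integral _ _).symm
  have hcomm := v.integral_comp_comm (Integrable.of_eval fun i => hg i.1.1 i.1.2 :
    Integrable (fun x => ι (g x)) μ)
  rw [hι] at hcomm
  simp only [hv] at hcomm
  exact hcomm.symm

lemma hasSum_integral [MeasurableSingletonClass X] (hg : SchwartzIntegrable Measure.count g) :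
    HasSum g hg.integral := by
  rw [HasSum, SummationFilter.unconditional_filter, (schwartz_withSeminorms ℝ E F).tendsto_nhds]
  rintro ⟨k, l⟩ ε hε
  have hsum : HasSum (fun s => weightedDeriv k l (g s)) (weightedDeriv k l hg.integral) := by
    have hdirac := hasSum_integral_measure (μ := fun x : X => Measure.dirac x) (hg k l)
    simp only [integral_dirac] at hdirac
    rw [hg.weightedDeriv_integral]
    exact hdirac
  filter_upwards [Metric.tendsto_nhds.1 hsum ε hε] with t ht
  rwa [dist_eq_norm, ← map_sum, ← map_sub, norm_weightedDeriv] at ht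

end SchwartzIntegrable

/-- A family of operators on Schwartz functions whose values at each `ψ` are integrable, and whose
continuity constants are integrable as well, so that `ψ ↦ ∫ R s ψ dμ(s)` is again continuous. -/
structure IntegrableFamily {D G : Type*} [NormedAddCommGroup D] [NormedSpace ℝ D]
    [NormedAddCommGroup G] [NormedSpace ℝ G] (μ : Measure X)
    (R : X → 𝓢(D, G) →L[ℝ] 𝓢(E, F)) : Prop where
  integrable : ∀ ψ, SchwartzIntegrable μ (fun s => R s ψ)
  bound : ∀ k l, ∃ (S : Finset (ℕ × ℕ)) (b : X → ℝ), Integrable b μ ∧ ∀ s ψ,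
    SchwartzMap.seminorm ℝ k l (R s ψ) ≤ b s * S.sup (schwartzSeminormFamily ℝ D G) ψ

namespace IntegrableFamily

variable {D G : Type*} [NormedAddCommGroup D] [NormedSpace ℝ D]
  [NormedAddCommGroup G] [NormedSpace ℝ G] {R : X → 𝓢(D, G) →L[ℝ] 𝓢(E, F)}

/-- The operator `ψ ↦ ∫ R s ψ dμ(s)`, integrated pointwise. -/
def integralCLM (hR : IntegrableFamily μ R) : 𝓢(D, G) →L[ℝ] 𝓢(E, F) :=
  SchwartzMap.mkCLM (fun ψ x => ∫ s, R s ψ x ∂μ)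
    (fun ψ φ x => by
      simpa using integral_add ((hR.integrable ψ).smoothDominated.integrable x)
        ((hR.integrable φ).smoothDominated.integrable x))
    (fun c ψ x => by simpa using integral_smul c _)
    (fun ψ => (hR.integrable ψ).smoothDominated.contDiff_integral)
    (fun ⟨k, l⟩ => by
      obtain ⟨S, b, hb, hRb⟩ := hR.bound k l
      refine ⟨S, ∫ s, |b s| ∂μ, integral_nonneg fun s => abs_nonneg _, fun ψ x => ?_⟩
      refine ((hR.integrable ψ).pow_mul_norm_iteratedFDeriv_integral_le k l x).trans ?_
      rw [← integral_mul_const]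
      refine integral_mono ((hR.integrable ψ).integrable_seminorm k l) (hb.abs.mul_const _)
        fun s => (hRb s ψ).trans ?_
      exact mul_le_mul_of_nonneg_right (le_abs_self _) (apply_nonneg _ _))

lemma integralCLM_eq_integral (hR : IntegrableFamily μ R) (ψ : 𝓢(D, G)) :
    hR.integralCLM ψ = (hR.integrable ψ).integral := rfl

end IntegrableFamily

section Count

variable {D G : Type*} [NormedAddCommGroup D] [NormedSpace ℝ D]
  [NormedAddCommGroup G] [NormedSpace ℝ G]

lemma exists_seminorm_le_mul_sup_seminorm (R : 𝓢(D, G) →L[ℝ] 𝓢(E, F)) (k l : ℕ) :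
    ∃ (S : Finset (ℕ × ℕ)) (C : ℝ), 0 ≤ C ∧ ∀ ψ,
      SchwartzMap.seminorm ℝ k l (R ψ) ≤ C * S.sup (schwartzSeminormFamily ℝ D G) ψ := by
  have hcont : Continuous ((SchwartzMap.seminorm ℝ k l).comp R.toLinearMap) :=
    ((schwartz_withSeminorms ℝ E F).continuous_seminorm (k, l)).comp R.continuous
  obtain ⟨S, C, -, hC⟩ := Seminorm.bound_of_continuous (schwartz_withSeminorms ℝ D G) _ hcont
  exact ⟨S, C, C.2, hC⟩

lemma integrableFamily_count [MeasurableSingletonClass X] {R : X → 𝓢(D, G) →L[ℝ] 𝓢(E, F)}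
    (hR : ∀ k l, ∃ (S : Finset (ℕ × ℕ)) (b : X → ℝ), Summable b ∧ ∀ᶠ s in cofinite, ∀ ψ,
      SchwartzMap.seminorm ℝ k l (R s ψ) ≤ b s * S.sup (schwartzSeminormFamily ℝ D G) ψ) :
    IntegrableFamily Measure.count R := by
  have hbound : ∀ k l, ∃ (S : Finset (ℕ × ℕ)) (b : X → ℝ), Summable b ∧ ∀ s ψ,
      SchwartzMap.seminorm ℝ k l (R s ψ) ≤ b s * S.sup (schwartzSeminormFamily ℝ D G) ψ :=
    fun k l => by
    classical
    obtain ⟨S, b, hb, hRb⟩ := hR k l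
    choose S' C hC hRC using fun s => exists_seminorm_le_mul_sup_seminorm (R s) k l
    have hfin := eventually_cofinite.1 hRb
    set t : Finset X := hfin.toFinset with ht
    refine ⟨S ∪ t.biUnion S', fun s => if s ∈ t then C s else |b s|, ?_, fun s ψ => ?_⟩
    · refine hb.abs.congr_cofinite ?_
      filter_upwards [t.finite_toSet.compl_mem_cofinite] with s hs
      exact (if_neg hs).symm
    · have hmono {S₁ S₂ : Finset (ℕ × ℕ)} (h : S₁ ⊆ S₂) :=
        Finset.sup_mono (f := schwartzSeminormFamily ℝ D G) h ψ
      dsimp only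
      split_ifs with hs
      · exact (hRC s ψ).trans (mul_le_mul_of_nonneg_left (hmono
          ((Finset.subset_biUnion_of_mem S' hs).trans Finset.subset_union_right)) (hC s))
      · rw [ht, Set.Finite.mem_toFinset, Set.mem_ofPred_eq, not_not] at hs
        exact (hs ψ).trans (mul_le_mul (le_abs_self _) (hmono Finset.subset_union_left)
          (apply_nonneg _ _) (abs_nonneg _))
  refine ⟨fun ψ k l => ?_, fun k l => ?_⟩
  · obtain ⟨S, b, hb, hRb⟩ := hbound k l
    exact integrable_count_iff.2 <| .of_nonneg_of_le (fun _ => norm_nonneg _)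
      (fun s => (norm_weightedDeriv k l _).trans_le (hRb s ψ)) (hb.mul_right _)
  · obtain ⟨S, b, hb, hRb⟩ := hbound k l
    exact ⟨S, b, integrable_count_iff.2 hb.norm, hRb⟩

end Count

end SchwartzIntegral

section Slices

variable {E V F : Type*} [NormedAddCommGroup E] [NormedSpace ℝ E]
  [NormedAddCommGroup V] [NormedSpace ℝ V] [NormedAddCommGroup F] [NormedSpace ℝ F]

lemma iteratedFDeriv_comp_prodMk (S : 𝓢(E × V, F)) (l : ℕ) (t : V) (x : E) :
    iteratedFDeriv ℝ l (fun x => S (x, t)) x =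
      (iteratedFDeriv ℝ l S (x, t)).compContinuousLinearMap
        fun _ => ContinuousLinearMap.inl ℝ E V := by
  have hslice : (fun x => S (x, t)) =
      (fun y => S (y + (0, t))) ∘ ContinuousLinearMap.inl ℝ E V := by ext; simp
  have hsmooth : ContDiff ℝ ∞ fun y => S (y + (0, t)) :=
    (S.smooth ⊤).comp (contDiff_id.add contDiff_const)
  rw [hslice, (ContinuousLinearMap.inl ℝ E V).iteratedFDeriv_comp_right hsmooth x (mod_cast le_top),
    iteratedFDeriv_comp_add_right]
  simp

lemma norm_compContinuousLinearMap_inl_le {l : ℕ} (B : (E × V) [×l]→L[ℝ] F) :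
    ‖B.compContinuousLinearMap fun _ => ContinuousLinearMap.inl ℝ E V‖ ≤ ‖B‖ := by
  refine (ContinuousMultilinearMap.norm_compContinuousLinearMap_le _ _).trans
    (mul_le_of_le_one_right (norm_nonneg _) ?_)
  exact Finset.prod_le_one (fun _ _ => norm_nonneg _)
    fun _ _ => ContinuousLinearMap.norm_inl_le_one ℝ E V

lemma pow_mul_norm_iteratedFDeriv_comp_prodMk_le (S : 𝓢(E × V, F)) (k l : ℕ) (t : V) (x : E) :
    ‖x‖ ^ k * ‖iteratedFDeriv ℝ l (fun x => S (x, t)) x‖ ≤ SchwartzMap.seminorm ℝ k l S := by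
  have hx : ‖x‖ ≤ ‖(x, t)‖ := norm_fst_le (x, t)
  rw [iteratedFDeriv_comp_prodMk]
  refine le_trans ?_ (S.le_seminorm ℝ k l (x, t))
  gcongr
  exact norm_compContinuousLinearMap_inl_le _

/-- Restriction of a Schwartz function of `(x, t)` to a fixed `t`. -/
def sliceCLM (t : V) : 𝓢(E × V, F) →L[ℝ] 𝓢(E, F) :=
  SchwartzMap.mkCLM (fun S x => S (x, t)) (fun _ _ _ => rfl) (fun _ _ _ => rfl)
    (fun S => (S.smooth ⊤).comp (contDiff_id.prodMk contDiff_const))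
    (fun n => ⟨{n}, 1, zero_le_one, fun S x => by
      rw [one_mul, Finset.sup_singleton]
      exact pow_mul_norm_iteratedFDeriv_comp_prodMk_le S n.1 n.2 t x⟩)

@[simp]
lemma sliceCLM_apply (t : V) (S : 𝓢(E × V, F)) (x : E) : sliceCLM t S x = S (x, t) := rfl

lemma iteratedFDeriv_sliceCLM (S : 𝓢(E × V, F)) (l : ℕ) (t : V) (x : E) :
    iteratedFDeriv ℝ l (sliceCLM t S) x = (iteratedFDeriv ℝ l S (x, t)).compContinuousLinearMap
      fun _ => ContinuousLinearMap.inl ℝ E V :=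
  iteratedFDeriv_comp_prodMk S l t x

lemma seminorm_sliceCLM_le (S : 𝓢(E × V, F)) (k l n : ℕ) (t : V) :
    SchwartzMap.seminorm ℝ k l (sliceCLM t S) ≤ (1 + ‖t‖) ^ (-(n : ℝ)) * 2 ^ (k + n) *
      (Finset.Iic (k + n, l)).sup (schwartzSeminormFamily ℝ (E × V) F) S := by
  refine SchwartzMap.seminorm_le_bound ℝ k l _ (by positivity) fun x => ?_
  have hx : ‖x‖ ≤ 1 + ‖(x, t)‖ := (norm_fst_le (x, t)).trans (by linarith)
  have ht : 1 + ‖t‖ ≤ 1 + ‖(x, t)‖ := by gcongr; exact norm_snd_le (x, t)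
  rw [iteratedFDeriv_sliceCLM, Real.rpow_neg (by positivity), Real.rpow_natCast, mul_assoc,
    le_inv_mul_iff₀ (by positivity)]
  calc (1 + ‖t‖) ^ n * (‖x‖ ^ k * ‖(iteratedFDeriv ℝ l S (x, t)).compContinuousLinearMap
        fun _ => ContinuousLinearMap.inl ℝ E V‖)
      ≤ (1 + ‖(x, t)‖) ^ n * ((1 + ‖(x, t)‖) ^ k * ‖iteratedFDeriv ℝ l S (x, t)‖) := by
        gcongr
        exact norm_compContinuousLinearMap_inl_le _
    _ = (1 + ‖(x, t)‖) ^ (k + n) * ‖iteratedFDeriv ℝ l S (x, t)‖ := by ring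
    _ ≤ _ := SchwartzMap.one_add_le_sup_seminorm_apply (𝕜 := ℝ) (m := (k + n, l)) le_rfl le_rfl
        S (x, t)

lemma pow_mul_norm_iteratedFDeriv_prodMk_sub_le (S : 𝓢(E × V, F)) (k l : ℕ) (t t' : V) (x : E) :
    ‖x‖ ^ k * ‖iteratedFDeriv ℝ l S (x, t) - iteratedFDeriv ℝ l S (x, t')‖ ≤
      SchwartzMap.seminorm ℝ k (l + 1) S * ‖t - t'‖ := by
  have hdiff : Differentiable ℝ (iteratedFDeriv ℝ l S) :=
    (S.smooth ⊤).differentiable_iteratedFDeriv (mod_cast ENat.natCast_lt_top l)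
  have hderiv : ∀ s : V, HasFDerivAt (fun s => ‖x‖ ^ k • iteratedFDeriv ℝ l S (x, s))
      (‖x‖ ^ k • (fderiv ℝ (iteratedFDeriv ℝ l S) (x, s)).comp (.inr ℝ E V)) s := fun s =>
    ((hdiff (x, s)).hasFDerivAt.comp s (hasFDerivAt_prodMk_right x s)).fun_const_smul _
  have hbound : ∀ s : V,
      ‖‖x‖ ^ k • (fderiv ℝ (iteratedFDeriv ℝ l S) (x, s)).comp (.inr ℝ E V)‖ ≤
        SchwartzMap.seminorm ℝ k (l + 1) S := fun s => by
    have hx : ‖x‖ ≤ ‖(x, s)‖ := norm_fst_le (x, s)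
    have hcomp : ‖(fderiv ℝ (iteratedFDeriv ℝ l S) (x, s)).comp (.inr ℝ E V)‖ ≤
        ‖iteratedFDeriv ℝ (l + 1) S (x, s)‖ := by
      rw [← norm_fderiv_iteratedFDeriv]
      exact (ContinuousLinearMap.opNorm_comp_le _ _).trans
        (mul_le_of_le_one_right (norm_nonneg _) (ContinuousLinearMap.norm_inr_le_one ℝ E V))
    refine (ContinuousLinearMap.opNorm_smul_le _ _).trans ?_
    rw [norm_pow, norm_norm]
    refine le_trans ?_ (S.le_seminorm ℝ k (l + 1) (x, s))
    gcongr
  have hmv := convex_univ.norm_image_sub_le_of_norm_hasFDerivWithin_le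
    (fun s _ => (hderiv s).hasFDerivWithinAt) (fun s _ => hbound s) (Set.mem_univ t')
    (Set.mem_univ t)
  rwa [← smul_sub, norm_smul, norm_pow, norm_norm] at hmv

lemma seminorm_sliceCLM_sub_sliceCLM_le (S : 𝓢(E × V, F)) (k l : ℕ) (t t' : V) :
    SchwartzMap.seminorm ℝ k l (sliceCLM t S - sliceCLM t' S) ≤
      SchwartzMap.seminorm ℝ k (l + 1) S * ‖t - t'‖ := by
  refine SchwartzMap.seminorm_le_bound ℝ k l _ (by positivity) fun x => ?_
  have hsub : iteratedFDeriv ℝ l (sliceCLM t S - sliceCLM t' S : 𝓢(E, F)) x =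
      (iteratedFDeriv ℝ l S (x, t) - iteratedFDeriv ℝ l S (x, t')).compContinuousLinearMap
        fun _ => ContinuousLinearMap.inl ℝ E V := by
    have hsub' := iteratedFDeriv_sub_apply (i := l) (x := x) ((sliceCLM t S).smooth l).contDiffAt
      ((sliceCLM t' S).smooth l).contDiffAt
    rw [iteratedFDeriv_sliceCLM, iteratedFDeriv_sliceCLM] at hsub'
    exact hsub'
  rw [hsub]
  refine le_trans ?_ (pow_mul_norm_iteratedFDeriv_prodMk_sub_le S k l t t' x)
  gcongr
  exact norm_compContinuousLinearMap_inl_le _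

lemma continuous_weightedDeriv_sliceCLM (S : 𝓢(E × V, F)) (k l : ℕ) :
    Continuous fun t : V => weightedDeriv k l (sliceCLM t S) := by
  refine (LipschitzWith.of_dist_le_mul (K := (SchwartzMap.seminorm ℝ k (l + 1) S).toNNReal)
    fun t t' => ?_).continuous
  rw [dist_eq_norm, ← map_sub, norm_weightedDeriv, Real.coe_toNNReal _ (apply_nonneg _ _),
    dist_eq_norm]
  exact seminorm_sliceCLM_sub_sliceCLM_le S k l t t'

variable [MeasurableSpace V] [BorelSpace V] [SecondCountableTopology V]

lemma integrableFamily_sliceCLM (μ : Measure V) [μ.HasTemperateGrowth] :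
    IntegrableFamily μ (fun t => (sliceCLM t : 𝓢(E × V, F) →L[ℝ] 𝓢(E, F))) where
  integrable S k l :=
    ((Measure.integrable_pow_neg_integrablePower μ).mul_const _ |>.mul_const _).mono'
      (continuous_weightedDeriv_sliceCLM S k l).aestronglyMeasurable
      (.of_forall fun t => (norm_weightedDeriv k l _).trans_le (seminorm_sliceCLM_le S k l _ t))
  bound k l := ⟨_, _, (Measure.integrable_pow_neg_integrablePower μ).mul_const _,
    fun t S => seminorm_sliceCLM_le S k l _ t⟩

end Slices

section DilationSeries

variable {V D W G : Type*} [NormedAddCommGroup V] [NormedSpace ℝ V] [MeasurableSpace V]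
  [BorelSpace V] [SecondCountableTopology V] {μ : Measure V} [μ.HasTemperateGrowth]
  [NormedAddCommGroup D] [NormedSpace ℝ D] [NormedAddCommGroup W] [NormedSpace ℝ W]
  [NormedAddCommGroup G] [NormedSpace ℝ G] [CompleteSpace G]

lemma exists_seminorm_smulLeftCLM_averageCLM_le {κ : 𝓢(V, ℝ)}
    (hκ : ∀ M, MomentsVanishBelow μ κ M) {η : W → ℝ} (hη : η.HasTemperateGrowth) (k l : ℕ) :
    ∃ N m : ℕ, ∀ M, ∃ C : ℝ, 0 ≤ C ∧ ∀ (L : V →L[ℝ] D) (A : D →L[ℝ] W) (ψ : 𝓢(D, G)),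
      SchwartzMap.seminorm ℝ k l (SchwartzMap.smulLeftCLM G (η ∘ A) (averageCLM μ κ L ψ)) ≤
        C * (1 + ‖A‖) ^ m * (‖L‖ ^ M * (1 + ‖L‖) ^ N) *
          (Finset.Iic (N, M + l)).sup (schwartzSeminormFamily ℝ D G) ψ := by
  obtain ⟨N, m, C, hC, hmul⟩ := exists_seminorm_smulLeftCLM_comp_le (D := D) (G := G) hη k l
  refine ⟨N, m, fun M => ⟨C * (2 ^ N * ∫ z, ‖κ z‖ * (‖z‖ ^ M * (1 + ‖z‖) ^ N) ∂μ),
    by positivity, fun L A ψ => (hmul A _).trans ?_⟩⟩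
  exact (mul_le_mul_of_nonneg_left ((hκ M).sup_seminorm_averageCLM_le N l L ψ)
    (by positivity)).trans_eq (by ring)

lemma exists_summable_seminorm_smulLeftCLM_averageCLM_le {κ : 𝓢(V, ℝ)}
    (hκ : ∀ M, MomentsVanishBelow μ κ M) {η : W → ℝ} (hη : η.HasTemperateGrowth)
    {L : ℕ → V →L[ℝ] D} {A : ℕ → D →L[ℝ] W} {r ρ : ℝ} (hr : r < 1) (hρ : 1 ≤ ρ)
    (hL : ∀ j, ‖L j‖ ≤ r ^ j) (hA : ∀ j, ‖A j‖ ≤ ρ ^ j) (k l : ℕ) :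
    ∃ (S : Finset (ℕ × ℕ)) (b : ℕ → ℝ), Summable b ∧ ∀ j (ψ : 𝓢(D, G)),
      SchwartzMap.seminorm ℝ k l (SchwartzMap.smulLeftCLM G (η ∘ A j) (averageCLM μ κ (L j) ψ)) ≤
        b j * S.sup (schwartzSeminormFamily ℝ D G) ψ := by
  obtain ⟨N, m, hbound⟩ := exists_seminorm_smulLeftCLM_averageCLM_le (D := D) (G := G) hκ hη k l
  have hr0 : 0 ≤ r := by simpa using (norm_nonneg _).trans (hL 1)
  obtain ⟨M, hM⟩ : ∃ M : ℕ, r ^ M * ρ ^ m < 1 := by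
    obtain ⟨M, hM⟩ := exists_pow_lt_of_lt_one (show 0 < (ρ ^ m)⁻¹ by positivity) hr
    exact ⟨M, by rwa [← lt_div_iff₀ (by positivity), one_div]⟩
  obtain ⟨C, hC, hLA⟩ := hbound M
  refine ⟨Finset.Iic (N, M + l), fun j => C * 2 ^ m * 2 ^ N * (r ^ M * ρ ^ m) ^ j,
    (summable_geometric_of_lt_one (by positivity) hM).mul_left _, fun j ψ => (hLA _ _ ψ).trans ?_⟩
  refine mul_le_mul_of_nonneg_right ?_ (apply_nonneg _ _)
  have hL1 : 1 + ‖L j‖ ≤ 2 := by linarith [hL j, pow_le_one₀ (n := j) hr0 hr.le]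
  have hA1 : 1 + ‖A j‖ ≤ 2 * ρ ^ j := by linarith [hA j, one_le_pow₀ (n := j) hρ]
  calc C * (1 + ‖A j‖) ^ m * (‖L j‖ ^ M * (1 + ‖L j‖) ^ N)
      ≤ C * (2 * ρ ^ j) ^ m * ((r ^ j) ^ M * 2 ^ N) := by gcongr; exact hL j
    _ = C * 2 ^ m * 2 ^ N * (r ^ M * ρ ^ m) ^ j := by
        rw [mul_pow, mul_pow, pow_right_comm r, pow_right_comm ρ]
        ring

end DilationSeries

section Anisotropic

variable {d : ℕ}

lemma VanishingMoments.integral_mul_prod_eq_zero {θ : (Fin d → ℝ) → ℝ} (hθ : VanishingMoments θ)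
    {m : ℕ} (r : Fin m → Fin d) : ∫ z, θ z * ∏ i, z (r i) = 0 := by
  rw [← hθ fun q => Finset.card {i | r i = q}]
  congr 1 with z
  rw [← Finset.prod_fiberwise' Finset.univ r z, mul_comm]
  simp

lemma VanishingMoments.momentsVanishBelow {θ : 𝓢(Fin d → ℝ, ℝ)} (hθ : VanishingMoments θ)
    (M : ℕ) : MomentsVanishBelow volume θ M := fun m _ B => by
  have hexpand : ∀ z : Fin d → ℝ, B (fun _ => z) =
      ∑ r : Fin m → Fin d, (∏ i, z (r i)) * B (fun i => Pi.single (r i) 1) := fun z => by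
    conv_lhs => rw [pi_eq_sum_univ' z, B.map_sum]
    exact Finset.sum_congr rfl fun r _ => B.map_smul_univ _ _
  have hint : ∀ r : Fin m → Fin d, Integrable fun z => θ z * ∏ i, z (r i) := fun r => by
    simpa using integrable_smul_diagonal (μ := volume) θ
      ((ContinuousMultilinearMap.mkPiAlgebra ℝ (Fin m) ℝ).compContinuousLinearMap
        fun i => ContinuousLinearMap.proj (R := ℝ) (φ := fun _ : Fin d => ℝ) (r i))
  simp_rw [hexpand, Finset.mul_sum, ← mul_assoc]
  rw [integral_finsetSum _ fun r _ => (hint r).mul_const _]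
  simp_rw [integral_mul_const, hθ.integral_mul_prod_eq_zero, zero_mul, Finset.sum_const_zero]

/-- The linear map `z ↦ 2 ^ (-ja) z`, inverse to the dilation of order `j`. -/
def anisoContraction (a : Fin d → ℝ) (j : ℕ) : (Fin d → ℝ) →L[ℝ] (Fin d → ℝ) :=
  ContinuousLinearMap.pi fun i => ((2 : ℝ) ^ (-((j : ℝ) * a i))) • ContinuousLinearMap.proj i

lemma anisoContraction_apply (a : Fin d → ℝ) (j : ℕ) (z : Fin d → ℝ) (i : Fin d) :
    anisoContraction a j z i = (2 : ℝ) ^ (-((j : ℝ) * a i)) * z i := rfl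

lemma exists_norm_anisoContraction_le_pow {a : Fin d → ℝ} (ha : ∀ i, 0 < a i) :
    ∃ r < 1, ∀ j, ‖anisoContraction a j‖ ≤ r ^ j := by
  obtain ⟨ε, hε, hεa⟩ := Pi.exists_forall_pos_add_lt ha
  refine ⟨(2 : ℝ) ^ (-ε), Real.rpow_lt_one_of_one_lt_of_neg one_lt_two (neg_neg_of_pos hε),
    fun j => ContinuousLinearMap.opNorm_le_bound _ (by positivity) fun z =>
      (pi_norm_le_iff_of_nonneg (by positivity)).2 fun i => ?_⟩
  have hexp : -((j : ℝ) * a i) ≤ -ε * j := by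
    nlinarith [hεa i, (Nat.cast_nonneg j : (0 : ℝ) ≤ j)]
  rw [anisoContraction_apply, norm_mul, Real.norm_of_nonneg (by positivity),
    ← Real.rpow_mul_natCast two_pos.le]
  gcongr
  · exact one_le_two
  · exact norm_le_pi_norm z i

lemma anisoDil_eq (a : Fin d → ℝ) (θ₀ θ : (Fin d → ℝ) → ℝ) (j : ℕ) (x : Fin d → ℝ) :
    anisoDil a θ₀ θ j x = (2 : ℝ) ^ ((j : ℝ) * ∑ i, a i) *
      (if j = 0 then θ₀ else θ) (fun i => (2 : ℝ) ^ ((j : ℝ) * a i) * x i) := by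
  rcases eq_or_ne j 0 with rfl | hj
  · simp [anisoDil]
  · simp [anisoDil, hj]

lemma integral_eq_abs_prod_smul_integral_comp_mul {F : Type*} [NormedAddCommGroup F]
    [NormedSpace ℝ F] {b : Fin d → ℝ} (hb : ∀ i, b i ≠ 0) (f : (Fin d → ℝ) → F) :
    ∫ z, f z = |∏ i, b i| • ∫ y, f (b * y) := by
  have hmap := Real.smul_map_diagonal_volume_pi (D := b)
    (by rw [Matrix.det_diagonal]; exact Finset.prod_ne_zero_iff.2 fun i _ => hb i)
  have hlin : ⇑(Matrix.toLin' (Matrix.diagonal b)) =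
      MeasurableEquiv.piCongrRight fun i => MeasurableEquiv.mulLeft₀ (b i) (hb i) := by
    ext y i
    rw [Matrix.toLin'_apply, Matrix.mulVec_diagonal]
    rfl
  rw [hlin, Matrix.det_diagonal] at hmap
  conv_lhs => rw [← hmap]
  rw [integral_smul_measure, integral_map_equiv, ENNReal.toReal_ofReal (abs_nonneg _)]
  rfl

lemma integral_anisoDil_sub_mul (a : Fin d → ℝ) (θ₀ θ : (Fin d → ℝ) → ℝ) (j : ℕ)
    (x : Fin d → ℝ) (g : (Fin d → ℝ) → ℝ) :
    ∫ y, anisoDil a θ₀ θ j (y - x) * g y =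
      ∫ z, (if j = 0 then θ₀ else θ) z * g (x + anisoContraction a j z) := by
  set b : Fin d → ℝ := fun i => (2 : ℝ) ^ ((j : ℝ) * a i) with hb
  have hinv : ∀ y, anisoContraction a j (b * y) = y := fun y => by
    ext i
    rw [anisoContraction_apply, Pi.mul_apply, hb, ← mul_assoc, ← Real.rpow_add two_pos,
      neg_add_cancel, Real.rpow_zero, one_mul]
  have hprod : |∏ i, b i| = (2 : ℝ) ^ ((j : ℝ) * ∑ i, a i) := by
    rw [abs_of_pos (Finset.prod_pos fun i _ => by positivity), Finset.mul_sum,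
      Real.rpow_sum_of_pos two_pos]
  rw [← integral_add_right_eq_self _ x,
    integral_eq_abs_prod_smul_integral_comp_mul (b := b) (fun i => by positivity)
      (fun z => (if j = 0 then θ₀ else θ) z * g (x + anisoContraction a j z)), hprod,
    smul_eq_mul, ← integral_const_mul]
  congr 1 with y
  rw [hinv, anisoDil_eq, add_sub_cancel_right, add_comm x y, mul_assoc]
  rfl

end Anisotropic

section Operator

variable {X D E V F G : Type*} [MeasurableSpace X] [MeasurableSingletonClass X]
  [NormedAddCommGroup D] [NormedSpace ℝ D] [NormedAddCommGroup E] [NormedSpace ℝ E]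
  [NormedAddCommGroup V] [NormedSpace ℝ V] [MeasurableSpace V] [BorelSpace V]
  [SecondCountableTopology V] [NormedAddCommGroup F] [NormedSpace ℝ F] [CompleteSpace F]
  [NormedAddCommGroup G] [NormedSpace ℝ G]

lemma apply_integralCLM_sliceCLM_integralCLM_count {R : X → 𝓢(D, G) →L[ℝ] 𝓢(E × V, F)}
    (hR : IntegrableFamily Measure.count R) (ν : Measure V) [ν.HasTemperateGrowth]
    (u : 𝓢(E, F) →L[ℝ] ℝ) (ψ : 𝓢(D, G)) :
    u ((integrableFamily_sliceCLM ν).integralCLM (hR.integralCLM ψ)) =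
      ∫ t, ∑' s, u (sliceCLM t (R s ψ)) ∂ν := by
  rw [IntegrableFamily.integralCLM_eq_integral, SchwartzIntegrable.apply_integral]
  congr 1 with t
  exact ((u.comp (sliceCLM t)).hasSum (hR.integrable ψ).hasSum_integral).tsum_eq.symm

end Operator

section AnisoTerm

variable {d : ℕ} (a : Fin d → ℝ) (at_ : ℝ) (k₀ k : 𝓢(Fin d → ℝ, ℝ)) {η : ℝ → ℝ}

/-- The `j`-th term `ψ ↦ (ǩ_j * ψ(·, t))(x) η(2 ^ (j a_t) t)` of the series defining the operator,
with `ǩ_j * ψ(·, t)` written as an average over the contracted kernel. -/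
def anisoTerm (η : ℝ → ℝ) (j : ℕ) : 𝓢((Fin d → ℝ) × ℝ, ℝ) →L[ℝ] 𝓢((Fin d → ℝ) × ℝ, ℝ) :=
  (SchwartzMap.smulLeftCLM ℝ
    (η ∘ ((2 : ℝ) ^ ((j : ℝ) * at_) • ContinuousLinearMap.snd ℝ (Fin d → ℝ) ℝ))).comp
    (averageCLM volume (if j = 0 then k₀ else k)
      ((ContinuousLinearMap.inl ℝ (Fin d → ℝ) ℝ).comp (anisoContraction a j)))

lemma anisoTerm_apply (hη : η.HasTemperateGrowth) (j : ℕ) (ψ : 𝓢((Fin d → ℝ) × ℝ, ℝ))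
    (p : (Fin d → ℝ) × ℝ) :
    anisoTerm a at_ k₀ k η j ψ p = (∫ y, anisoDil a k₀ k j (y - p.1) * ψ (y, p.2)) *
      η ((2 : ℝ) ^ ((j : ℝ) * at_) * p.2) := by
  have hshift : ∀ z, p + (ContinuousLinearMap.inl ℝ (Fin d → ℝ) ℝ).comp (anisoContraction a j) z =
      (p.1 + anisoContraction a j z, p.2) := fun z => by ext <;> simp
  rw [integral_anisoDil_sub_mul a k₀ k j p.1 fun y => ψ (y, p.2), mul_comm, anisoTerm,
    ContinuousLinearMap.comp_apply,
    SchwartzMap.smulLeftCLM_apply_apply (hη.comp (ContinuousLinearMap.hasTemperateGrowth _)),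
    averageCLM_apply]
  simp_rw [hshift]
  split_ifs <;> rfl

lemma sliceCLM_anisoTerm (hη : η.HasTemperateGrowth) {j : ℕ} {ψ : 𝓢((Fin d → ℝ) × ℝ, ℝ)} {t : ℝ}
    {φ : 𝓢(Fin d → ℝ, ℝ)} (hφ : ∀ x, φ x = ∫ y, anisoDil a k₀ k j (y - x) * ψ (y, t)) :
    sliceCLM t (anisoTerm a at_ k₀ k η j ψ) = η ((2 : ℝ) ^ ((j : ℝ) * at_) * t) • φ := by
  ext x
  rw [sliceCLM_apply, anisoTerm_apply a at_ k₀ k hη, ← hφ, smul_apply, smul_eq_mul, mul_comm]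

variable {a k}

lemma integrableFamily_anisoTerm (ha : ∀ i, 0 < a i) (hk : VanishingMoments k)
    (hη : η.HasTemperateGrowth) :
    IntegrableFamily Measure.count (anisoTerm a at_ k₀ k η) := by
  obtain ⟨r, hr, hcontr⟩ := exists_norm_anisoContraction_le_pow ha
  have hL : ∀ j, ‖(ContinuousLinearMap.inl ℝ (Fin d → ℝ) ℝ).comp (anisoContraction a j)‖ ≤ r ^ j :=
    fun j => (ContinuousLinearMap.opNorm_comp_le _ _).trans <|
      (mul_le_of_le_one_left (norm_nonneg _) (ContinuousLinearMap.norm_inl_le_one ℝ _ _)).trans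
        (hcontr j)
  have hA : ∀ j : ℕ, ‖(2 : ℝ) ^ ((j : ℝ) * at_) • ContinuousLinearMap.snd ℝ (Fin d → ℝ) ℝ‖ ≤
      ((2 : ℝ) ^ |at_|) ^ j := fun j => by
    rw [norm_smul, Real.norm_of_nonneg (by positivity), ← Real.rpow_mul_natCast two_pos.le]
    refine (mul_le_of_le_one_right (by positivity)
      (ContinuousLinearMap.norm_snd_le ..)).trans ?_
    rw [mul_comm]
    gcongr
    · exact one_le_two
    · exact le_abs_self at_
  refine integrableFamily_count fun k' l => ?_
  obtain ⟨S, b, hb, hS⟩ := exists_summable_seminorm_smulLeftCLM_averageCLM_le (G := ℝ)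
    hk.momentsVanishBelow hη hr (Real.one_le_rpow one_le_two (abs_nonneg at_)) hL hA k' l
  refine ⟨S, b, hb, (eventually_cofinite_ne 0).mono fun j hj ψ => ?_⟩
  rw [anisoTerm, if_neg hj]
  exact hS j ψ

end AnisoTerm

theorem Q_operator_transpose_general {d : ℕ} {a : Fin d → ℝ} (ha : ∀ i, 0 < a i) (at_ : ℝ)
    (k₀ : 𝓢(Fin d → ℝ, ℝ)) {k : 𝓢(Fin d → ℝ, ℝ)} (hkm : VanishingMoments k) {η : ℝ → ℝ}
    (hη : η.HasTemperateGrowth) :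
    ∃ T : 𝓢((Fin d → ℝ) × ℝ, ℝ) →L[ℝ] 𝓢(Fin d → ℝ, ℝ),
      (∀ (ψ : 𝓢((Fin d → ℝ) × ℝ, ℝ)) (F : ℕ → 𝓢((Fin d → ℝ) × ℝ, ℝ)),
        (∀ j p, F j p = (∫ y, anisoDil a k₀ k j (y - p.1) * ψ (y, p.2)) *
          η ((2 : ℝ) ^ ((j : ℝ) * at_) * p.2)) →
        ∃ S : 𝓢((Fin d → ℝ) × ℝ, ℝ),
          Tendsto (fun N => ∑ j ∈ Finset.range N, F j) atTop (𝓝 S)) ∧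
      (∀ (ψ : 𝓢((Fin d → ℝ) × ℝ, ℝ)) (x : Fin d → ℝ),
        T ψ x = ∫ t, ∑' j : ℕ, (∫ y, anisoDil a k₀ k j (y - x) * ψ (y, t)) *
          η ((2 : ℝ) ^ ((j : ℝ) * at_) * t)) ∧
      (∀ (u : 𝓢(Fin d → ℝ, ℝ) →L[ℝ] ℝ) (ψ : 𝓢((Fin d → ℝ) × ℝ, ℝ))
        (φ : ℕ → ℝ → 𝓢(Fin d → ℝ, ℝ)),
        (∀ j t x, φ j t x = ∫ y, anisoDil a k₀ k j (y - x) * ψ (y, t)) →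
        ∫ t, ∑' j : ℕ, η ((2 : ℝ) ^ ((j : ℝ) * at_) * t) * u (φ j t) = u (T ψ)) ∧
      (∀ ψ : 𝓢((Fin d → ℝ) × ℝ, ℝ),
        Continuous fun u : WeakDual ℝ 𝓢(Fin d → ℝ, ℝ) => u (T ψ)) := by
  have hR := integrableFamily_anisoTerm at_ k₀ ha hkm hη
  refine ⟨(integrableFamily_sliceCLM volume).integralCLM.comp hR.integralCLM,
    fun ψ F hF => ?_, fun ψ x => ?_, fun u ψ φ hφ => ?_, fun ψ => WeakDual.eval_continuous _⟩
  · have hF' : F = fun j => anisoTerm a at_ k₀ k η j ψ :=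
      funext fun j => SchwartzMap.ext fun p => by rw [hF, anisoTerm_apply a at_ k₀ k hη]
    rw [hF']
    exact ⟨_, (hR.integrable ψ).hasSum_integral.tendsto_sum_nat⟩
  · have heval := apply_integralCLM_sliceCLM_integralCLM_count hR volume
      ((BoundedContinuousFunction.evalCLM ℝ x).comp
        (SchwartzMap.toBoundedContinuousFunctionCLM ℝ (Fin d → ℝ) ℝ)) ψ
    refine heval.trans (integral_congr_ae (.of_forall fun t => tsum_congr fun j => ?_))
    exact anisoTerm_apply a at_ k₀ k hη j ψ (x, t)
  · rw [ContinuousLinearMap.comp_apply, apply_integralCLM_sliceCLM_integralCLM_count]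
    simp_rw [sliceCLM_anisoTerm a at_ k₀ k hη (hφ _ _), map_smul, smul_eq_mul]

/-- With kernels `k₀, k` and `η` as before: (i) for every
`ψ ∈ 𝓢(ℝⁿ×ℝ)` the series `Σ_j (x,t) ↦ (ǩ_j * ψ(·,t))(x)·η(2^{j a_t}t)` converges in
`𝓢(ℝⁿ×ℝ)` and `Tψ(x) = ∫_ℝ Σ_j (ǩ_j * ψ(·,t))(x)·η(2^{j a_t}t) dt` defines a continuous
linear map `T : 𝓢(ℝⁿ×ℝ) → 𝓢(ℝⁿ)`; (ii) `⟨Λ_{Qu}, ψ⟩ = ⟨u, Tψ⟩`, so `u ↦ Λ_{Qu}` is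
weak*-continuous from `𝓢'(ℝⁿ)` to `𝓢'(ℝⁿ×ℝ)`. -/
theorem Q_operator_transpose (n : ℕ) (a : Fin (n+1) → ℝ) (ha : ∀ i, 1 ≤ a i)
    (at_ : ℝ) (hat : 1 ≤ at_)
    (k₀ k : SchwartzMap (Fin (n+1) → ℝ) ℝ)
    (hk₀s : tsupport ⇑k₀ ⊆ {x : Fin (n+1) → ℝ | 0 ≤ x (Fin.last n)})
    (hks : tsupport ⇑k ⊆ {x : Fin (n+1) → ℝ | 0 ≤ x (Fin.last n)})
    (hkm : VanishingMoments ⇑k)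
    (hrep : ∀ (v : SchwartzMap (Fin (n+1) → ℝ) ℝ →L[ℝ] ℝ)
        (θ : SchwartzMap (Fin (n+1) → ℝ) ℝ)
        (c : ℕ → SchwartzMap (Fin (n+1) → ℝ) ℝ),
        (∀ (j : ℕ) (x : Fin (n+1) → ℝ),
          c j x = ∫ y : Fin (n+1) → ℝ, anisoDil a ⇑k₀ ⇑k j (y - x) * θ y) →
        Tendsto (fun N => ∑ j ∈ Finset.range N, v (c j)) atTop (nhds (v θ)))
    (η : SchwartzMap ℝ ℝ) (hη : η 0 = 1) :
    ∃ T : SchwartzMap ((Fin (n+1) → ℝ) × ℝ) ℝ →L[ℝ] SchwartzMap (Fin (n+1) → ℝ) ℝ,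
      -- (i-a) the series converges in `𝓢(ℝⁿ×ℝ)`
      (∀ (ψ : SchwartzMap ((Fin (n+1) → ℝ) × ℝ) ℝ)
         (F : ℕ → SchwartzMap ((Fin (n+1) → ℝ) × ℝ) ℝ),
        (∀ (j : ℕ) (p : (Fin (n+1) → ℝ) × ℝ),
          F j p = (∫ y : Fin (n+1) → ℝ, anisoDil a ⇑k₀ ⇑k j (y - p.1) * ψ (y, p.2))
            * η ((2:ℝ) ^ ((j:ℝ) * at_) * p.2)) →
        ∃ S : SchwartzMap ((Fin (n+1) → ℝ) × ℝ) ℝ,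
          Tendsto (fun N => ∑ j ∈ Finset.range N, F j) atTop (nhds S)) ∧
      -- (i-b) `Tψ(x) = ∫_ℝ Σ_j (ǩ_j * ψ(·,t))(x)·η(2^{j a_t}t) dt`
      (∀ (ψ : SchwartzMap ((Fin (n+1) → ℝ) × ℝ) ℝ) (x : Fin (n+1) → ℝ),
        T ψ x = ∫ t : ℝ, ∑' j : ℕ,
          (∫ y : Fin (n+1) → ℝ, anisoDil a ⇑k₀ ⇑k j (y - x) * ψ (y, t))
            * η ((2:ℝ) ^ ((j:ℝ) * at_) * t)) ∧
      -- (ii) `⟨Λ_{Qu}, ψ⟩ = ∫_ℝ ⟨Qu(·,t), ψ(·,t)⟩ dt = ⟨u, Tψ⟩`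
      (∀ (u : SchwartzMap (Fin (n+1) → ℝ) ℝ →L[ℝ] ℝ)
         (ψ : SchwartzMap ((Fin (n+1) → ℝ) × ℝ) ℝ)
         (d : ℕ → ℝ → SchwartzMap (Fin (n+1) → ℝ) ℝ),
        -- `d j t` is the Schwartz function `ǩ_j * ψ(·,t)`
        (∀ (j : ℕ) (t : ℝ) (x : Fin (n+1) → ℝ),
          d j t x = ∫ y : Fin (n+1) → ℝ, anisoDil a ⇑k₀ ⇑k j (y - x) * ψ (y, t)) →
        (∫ t : ℝ, ∑' j : ℕ, η ((2:ℝ) ^ ((j:ℝ) * at_) * t) * u (d j t)) = u (T ψ)) ∧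
      -- weak*-continuity of `u ↦ Λ_{Qu} = u ∘ T`
      (∀ ψ : SchwartzMap ((Fin (n+1) → ℝ) × ℝ) ℝ,
        Continuous fun u : WeakDual ℝ (SchwartzMap (Fin (n+1) → ℝ) ℝ) => u (T ψ)) :=
  Q_operator_transpose_general (fun i => zero_lt_one.trans_le (ha i)) at_ k₀ hkm
    η.hasTemperateGrowth

end
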